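/- Let L be a logic with a formula S such that {S} is L-consistent and there exists w ⊆ Fml_L with w ⊬_L S, and consider the privacy configuration (KB, AK, Sec) with KB := {S}, AK := ∅, Sec := {S}, and the constant query sequence q := (S, S, S, …). Then for any continuous, truthful, and effective censor Cens, the answer sequence Cens_PK(q) is constantly r, i.e., Cens_PK(q)_i = r for all i ∈ ω. -/

import Mathlib

/-- A logic: a set (type) of formulas with a consequence relation satisfying
reflexivity, weakening and transitivity (cut). -/
structure Logic where
  Fml : Type
  Proves : Set Fml → Fml → Prop
  refl : ∀ A : Fml, Proves {A} A
  weaken : ∀ (Γ Δ : Set Fml) (A : Fml), Proves Γ A → Proves (Γ ∪ Δ) A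
  cut : ∀ (Γ Δ : Set Fml) (C A : Fml),
    Proves Γ C → Proves (Δ ∪ {C}) A → Proves (Γ ∪ Δ) A

/-- Modal formulas over a logic `L`: boxed `L`-formulas, falsum, implication. -/
inductive MFml (L : Logic) : Type where
  | box : L.Fml → MFml L
  | bot : MFml L
  | imp : MFml L → MFml L → MFml L

/-- ¬A := A → ⊥ -/
def MFml.neg {L : Logic} (A : MFml L) : MFml L := MFml.imp A MFml.bot

/-- ⊤ := ⊥ → ⊥ -/
def MFml.top {L : Logic} : MFml L := MFml.imp MFml.bot MFml.bot

/-- A ∨ B := ¬A → B -/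
def MFml.or {L : Logic} (A B : MFml L) : MFml L := MFml.imp (MFml.neg A) B

/-- An M-model is a set of sets of `L`-formulas. -/
abbrev MModel (L : Logic) := Set (Set L.Fml)

/-- Truth of a modal formula in an M-model. -/
def Sat {L : Logic} (M : MModel L) : MFml L → Prop
  | MFml.box A => ∀ w ∈ M, L.Proves w A
  | MFml.bot => False
  | MFml.imp A B => Sat M A → Sat M B

/-- `M ⊩ Γ`. -/
def SatSet {L : Logic} (M : MModel L) (Γ : Set (MFml L)) : Prop :=
  ∀ A ∈ Γ, Sat M A

/-- Γ is satisfiable. -/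
def Satisfiable {L : Logic} (Γ : Set (MFml L)) : Prop :=
  ∃ M : MModel L, SatSet M Γ

/-- Γ ⊨ A. -/
def Entails {L : Logic} (Γ : Set (MFml L)) (A : MFml L) : Prop :=
  ∀ M : MModel L, SatSet M Γ → Sat M A

/-- A privacy configuration (KB, AK, Sec). -/
structure PrivacyConfig (L : Logic) where
  KB : Set L.Fml
  AK : Set (MFml L)
  Sec : Set L.Fml
  consistent : ∃ A : L.Fml, ¬ L.Proves KB A
  truthfulStart : ∀ A ∈ AK, Sat ({KB} : MModel L) A
  hiddenSecrets : ∀ s ∈ Sec, ¬ Entails AK (MFml.box s)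

/-- The answers 𝔸 = {t, u, r}. -/
inductive Ans : Type
  | t | u | r
deriving DecidableEq

open Classical in
/-- eval(KB, q) := t if KB ⊢ q and u otherwise. -/
noncomputable def evalKB (L : Logic) (KB : Set L.Fml) (q : L.Fml) : Ans :=
  if L.Proves KB q then Ans.t else Ans.u

/-- A censor assigns an answering function (on infinite query sequences,
indexed by ℕ) to each privacy configuration. -/
abbrev Censor (L : Logic) := PrivacyConfig L → (ℕ → L.Fml) → (ℕ → Ans)

/-- A censor is continuous iff answers on an initial segment only depend on
the queries in that initial segment. -/
def ContinuousCensor {L : Logic} (Cens : Censor L) : Prop :=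
  ∀ (PK : PrivacyConfig L) (q q' : ℕ → L.Fml) (n : ℕ),
    (∀ i < n, q i = q' i) → ∀ i < n, Cens PK q i = Cens PK q' i

/-- A censor is truthful iff each answer is either the correct evaluation or refusal. -/
def Truthful {L : Logic} (Cens : Censor L) : Prop :=
  ∀ (PK : PrivacyConfig L) (q : ℕ → L.Fml) (i : ℕ),
    Cens PK q i = evalKB L PK.KB (q i) ∨ Cens PK q i = Ans.r

/-- Content of an answer to a query. -/
def contAns {L : Logic} (q : L.Fml) : Ans → MFml L
  | Ans.t => MFml.box q
  | Ans.u => MFml.neg (MFml.box q)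
  | Ans.r => MFml.top

/-- The content of the answers of a censor to a query sequence up to `n`
(0-based: queries with index `< n`), including the a priori knowledge. -/
def cont {L : Logic} (Cens : Censor L) (PK : PrivacyConfig L)
    (q : ℕ → L.Fml) (n : ℕ) : Set (MFml L) :=
  {F | ∃ i < n, F = contAns (q i) (Cens PK q i)} ∪ PK.AK

/-- The full content of a knowledge base. -/
noncomputable def fullContent (L : Logic) (KB : Set L.Fml) : Set (MFml L) :=
  {F | ∃ A : L.Fml, F = contAns A (evalKB L KB A)}

/-- A censor is credible iff the content of its answers is always satisfiable. -/
def Credible {L : Logic} (Cens : Censor L) : Prop :=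
  ∀ (PK : PrivacyConfig L) (q : ℕ → L.Fml) (n : ℕ), Satisfiable (cont Cens PK q n)

/-- A censor is effective iff the content of its answers never entails a boxed secret. -/
def Effective {L : Logic} (Cens : Censor L) : Prop :=
  ∀ (PK : PrivacyConfig L) (q : ℕ → L.Fml) (n : ℕ),
    ∀ s ∈ PK.Sec, ¬ Entails (cont Cens PK q n) (MFml.box s)

/-- A censor is minimally invasive iff whenever it distorts an answer,
replacing that answer by the correct evaluation (keeping the earlier answers)
would violate effectiveness or credibility. -/
def MinimallyInvasive {L : Logic} (Cens : Censor L) : Prop :=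
  ∀ (PK : PrivacyConfig L) (q : ℕ → L.Fml) (i : ℕ),
    Cens PK q i ≠ evalKB L PK.KB (q i) →
    ∀ Cens' : Censor L,
      (∀ j < i, Cens' PK q j = Cens PK q j) →
      Cens' PK q i = evalKB L PK.KB (q i) →
      ∃ n : ℕ,
        (∃ s ∈ PK.Sec, Entails (cont Cens' PK q n) (MFml.box s)) ∨
        ¬ Satisfiable (cont Cens' PK q n)

/-- A censor is repudiating iff for every privacy configuration and query
sequence there are alternative knowledge bases, not entailing any secret,
producing the same answers on each initial segment. -/
def Repudiating {L : Logic} (Cens : Censor L) : Prop :=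
  ∀ (PK : PrivacyConfig L) (q : ℕ → L.Fml),
    ∃ PKs : ℕ → PrivacyConfig L,
      (∀ i, (PKs i).AK = PK.AK ∧ (PKs i).Sec = PK.Sec) ∧
      (∀ n, ∀ i < n, Cens PK q i = Cens (PKs n) q i) ∧
      (∀ i, ∀ s ∈ PK.Sec, ¬ L.Proves (PKs i).KB s)

/-- A censor is non-refusing iff it never answers `r`. -/
def NonRefusing {L : Logic} (Cens : Censor L) : Prop :=
  ∀ (PK : PrivacyConfig L) (q : ℕ → L.Fml) (i : ℕ), Cens PK q i ≠ Ans.r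

/-- For the privacy configuration ({S}, ∅, {S}) and the constant
query sequence (S, S, …), every continuous, truthful and effective censor
answers constantly `r`. -/
theorem constant_refusal {L : Logic} (S : L.Fml)
    (hScons : ∃ A : L.Fml, ¬ L.Proves {S} A)
    (hw : ∃ w : Set L.Fml, ¬ L.Proves w S)
    (Cens : Censor L)
    (hcont : ContinuousCensor Cens) (htruth : Truthful Cens)
    (heff : Effective Cens)
    (PK : PrivacyConfig L)
    (hKB : PK.KB = {S}) (hAK : PK.AK = ∅) (hSec : PK.Sec = {S}) :
    ∀ i : ℕ, Cens PK (fun _ => S) i = Ans.r := by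
  intro i
  rcases htruth PK (fun _ => S) i with h | h
  · exfalso
    have ht : Cens PK (fun _ => S) i = Ans.t := by
      rw [h, hKB]
      exact if_pos (L.refl S)
    refine heff PK (fun _ => S) (i + 1) S (by rw [hSec]; rfl) ?_
    intro M hM
    refine hM (MFml.box S) (Or.inl ⟨i, Nat.lt_succ_self i, ?_⟩)
    rw [ht]
    rfl
  · exact h
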